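/- There exists a set of 22 points of PHG(2, ℤ/4ℤ) with at most 5 points on each line; explicitly, the points spanned by (1,0,0), (0,1,0), (0,0,1), (1,1,1), (0,1,1), (1,0,1), (1,1,0), (1,2,2), (2,1,2), (2,2,1), (1,3,3), (2,1,3), (1,2,3), (1,3,2), (1,2,0), (2,1,0), (2,0,1), (1,3,1), (1,0,2), (0,1,2), (0,2,1), (1,1,3) form such a set, and moreover every multiset of 23 points of PHG(2, ℤ/4ℤ) has a line containing at least 6 of its points counted with multiplicity. -/

import Mathlib

/-- A point of a projective Hjelmslev geometry PHG(n-1, R): a free rank-1 submodule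
of Rⁿ, i.e. the R-span of a vector having at least one unit coordinate. -/
def IsPoint {R : Type} [CommRing R] {n : ℕ} (P : Submodule R (Fin n → R)) : Prop :=
  ∃ v : Fin n → R, (∃ i, IsUnit (v i)) ∧ P = Submodule.span R {v}

/-- A free rank-k submodule of Rⁿ: a submodule linearly isomorphic to Rᵏ. -/
def IsFreeRank {R : Type} [CommRing R] {n : ℕ} (k : ℕ) (L : Submodule R (Fin n → R)) : Prop :=
  Nonempty ((Fin k → R) ≃ₗ[R] L)

/-- A line of PHG(2, R): a free rank-2 submodule of R³. -/
abbrev IsLine {R : Type} [CommRing R] (L : Submodule R (Fin 3 → R)) : Prop := IsFreeRank 2 L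

abbrev R4 := ZMod 4

/-- The point of PHG(2, ℤ/4ℤ) spanned by a vector. -/
def pt (v : Fin 3 → R4) : Submodule R4 (Fin 3 → R4) := Submodule.span R4 {v}

/-- The 22 listed points. -/
noncomputable def A22 : Set (Submodule R4 (Fin 3 → R4)) :=
  pt '' {![1,0,0], ![0,1,0], ![0,0,1], ![1,1,1], ![0,1,1], ![1,0,1], ![1,1,0],
    ![1,2,2], ![2,1,2], ![2,2,1], ![1,3,3], ![2,1,3], ![1,2,3], ![1,3,2],
    ![1,2,0], ![2,1,0], ![2,0,1], ![1,3,1], ![1,0,2], ![0,1,2], ![0,2,1], ![1,1,3]}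

/-!
Over a finite local ring with residue field `𝔽_q` and maximal ideal `𝔪`, the lines in a neighbour
class are obtained from one of them by adding vectors over `𝔪` to its coefficients, and a point
whose residue is incident with theirs lies on a fraction `1 / |𝔪|` of them. Hence the residues of an
`(n, u)`-arc form an `(n, |𝔪| u)`-arc in `PG(2, q)`. Summing over the `q + 1` lines through a point
of multiplicity `k` there gives `n + q k ≤ (q + 1) |𝔪| u`. For `ℤ/4ℤ` and `u = 5` this is
`n + 2 k ≤ 30`, whereas `n = 23` points in the Fano plane force `k ≥ 4` somewhere.
-/

open Finset IsLocalRing Matrix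
open scoped LinearAlgebra.Projectivization

section Hyperplane

variable {R : Type*} [CommRing R] {n : ℕ}

/-- Vectors with a unit coordinate, i.e. those spanning points. -/
def IsUnimodular {ι : Type*} (v : ι → R) : Prop := ∃ i, IsUnit (v i)

lemma isUnimodular_iff_residue_comp_ne_zero [IsLocalRing R] {ι : Type*} {v : ι → R} :
    IsUnimodular v ↔ residue R ∘ v ≠ 0 := by
  simp only [IsUnimodular, Function.ne_iff, Function.comp_apply, Pi.zero_apply,
    residue_ne_zero_iff_isUnit]

lemma dotProduct_eq_add_dotProduct_removeNth (i : Fin (n + 1)) (v w : Fin (n + 1) → R) :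
    v ⬝ᵥ w = v i * w i + i.removeNth v ⬝ᵥ i.removeNth w :=
  Fin.sum_univ_succAbove _ i

lemma exists_removeNth_eq_and_dotProduct_eq {v : Fin (n + 1) → R} {i : Fin (n + 1)}
    (hv : IsUnit (v i)) {I : Ideal R} {a : R} (ha : a ∈ I) {w : Fin n → R} (hw : ∀ j, w j ∈ I) :
    ∃ x : Fin (n + 1) → R, (∀ j, x j ∈ I) ∧ i.removeNth x = w ∧ x ⬝ᵥ v = a := by
  obtain ⟨u, hu⟩ := hv.exists_right_inv
  have hb : u * (a - w ⬝ᵥ i.removeNth v) ∈ I :=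
    I.mul_mem_left _ (I.sub_mem ha (I.sum_mem fun j _ => I.mul_mem_right _ (hw j)))
  refine ⟨i.insertNth (u * (a - w ⬝ᵥ i.removeNth v)) w, ?_, Fin.removeNth_insertNth .., ?_⟩
  · exact (Fin.forall_iff_succAbove i).2 ⟨by simpa using hb, by simpa using hw⟩
  · rw [dotProduct_eq_add_dotProduct_removeNth i, Fin.insertNth_apply_same,
      Fin.removeNth_insertNth]
    linear_combination (a - w ⬝ᵥ i.removeNth v) * hu

/-- The kernel of the linear form with coefficient vector `c`. -/
def hyperplane {ι : Type*} [Fintype ι] (c : ι → R) : Submodule R (ι → R) :=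
  LinearMap.ker (dotProductBilin R R c)

lemma mem_hyperplane {ι : Type*} [Fintype ι] {c v : ι → R} : v ∈ hyperplane c ↔ c ⬝ᵥ v = 0 :=
  Iff.rfl

lemma isFreeRank_hyperplane {R : Type} [CommRing R] {c : Fin (n + 1) → R} (hc : IsUnimodular c) :
    IsFreeRank n (hyperplane c) := by
  obtain ⟨i, hi⟩ := hc
  let forget : hyperplane c →ₗ[R] (Fin n → R) :=
    LinearMap.funLeft R R i.succAbove ∘ₗ (hyperplane c).subtype
  refine ⟨(LinearEquiv.ofBijective forget ⟨?_, fun w => ?_⟩).symm⟩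
  · refine (injective_iff_map_eq_zero _).2 fun ⟨v, hv⟩ h => ?_
    replace h : i.removeNth v = 0 := h
    rw [mem_hyperplane, dotProduct_eq_add_dotProduct_removeNth i, h, dotProduct_zero, add_zero,
      hi.mul_right_eq_zero] at hv
    exact Subtype.ext <| funext <| (Fin.forall_iff_succAbove i).2 ⟨hv, congrFun h⟩
  · obtain ⟨x, -, hxw, hx⟩ := exists_removeNth_eq_and_dotProduct_eq hi (I := ⊤) (a := 0)
      (w := w) trivial fun _ => trivial
    exact ⟨⟨x, by rwa [mem_hyperplane, dotProduct_comm]⟩, hxw⟩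

end Hyperplane

section Line

variable {R : Type*} [CommRing R] [IsLocalRing R] [IsArtinianRing R]

variable (R) in
lemma exists_ne_zero_forall_mem_maximalIdeal_mul_eq_zero :
    ∃ s : R, s ≠ 0 ∧ ∀ x ∈ maximalIdeal R, x * s = 0 := by
  obtain ⟨p, hp⟩ := associatedPrimes.nonempty R R
  obtain ⟨_, s, hs⟩ := isAssociatedPrime_iff.1 hp
  have hmax : p = maximalIdeal R := eq_maximalIdeal (IsArtinianRing.isMaximal_of_isPrime p)
  have hmem (x : R) : x ∈ maximalIdeal R ↔ x * s = 0 := by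
    rw [← hmax, hs, Submodule.mem_colon_singleton, smul_eq_mul, Submodule.mem_bot]
  refine ⟨s, ?_, fun x => (hmem x).1⟩
  rintro rfl
  exact (maximalIdeal.isMaximal R).ne_top ((Ideal.eq_top_iff_one _).2 ((hmem 1).2 (mul_zero 1)))

/-- A socle element turns a relation modulo the maximal ideal into a relation over `R`. -/
lemma linearIndependent_residue_comp {ι κ : Type*} {v : ι → κ → R} (hv : LinearIndependent R v) :
    LinearIndependent (ResidueField R) fun i => residue R ∘ v i := by
  obtain ⟨s, hs, hsm⟩ := exists_ne_zero_forall_mem_maximalIdeal_mul_eq_zero R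
  rw [linearIndependent_iff'] at hv ⊢
  intro t g hg i hi
  obtain ⟨r, rfl⟩ : ∃ r : ι → R, g = residue R ∘ r :=
    residue_surjective.comp_left g |>.imp fun _ => Eq.symm
  have hrel : ∀ k, ∑ j ∈ t, r j * v j k ∈ maximalIdeal R := fun k => by
    rw [← residue_eq_zero_iff]
    simpa using congrFun hg k
  have hsr : r i * s = 0 := hv t (fun j => r j * s) (by
    ext k
    simpa [sum_mul, mul_right_comm] using hsm _ (hrel k)) i hi
  by_contra hri
  exact hs (((residue_ne_zero_iff_isUnit _).1 hri).mul_right_eq_zero.1 hsr)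

lemma isUnimodular_crossProduct {a b : Fin 3 → R} (h : LinearIndependent R ![a, b]) :
    IsUnimodular (a ⨯₃ b) := by
  rw [isUnimodular_iff_residue_comp_ne_zero]
  have hab : LinearIndependent (ResidueField R) ![residue R ∘ a, residue R ∘ b] := by
    convert linearIndependent_residue_comp h using 1
    ext i; fin_cases i <;> rfl
  convert crossProduct_ne_zero_iff_linearIndependent.2 hab
  ext i
  fin_cases i <;> simp [cross_apply]

lemma exists_le_hyperplane_of_isLine {R : Type} [CommRing R] [IsLocalRing R] [IsArtinianRing R]
    {L : Submodule R (Fin 3 → R)} (hL : IsLine L) : ∃ c, IsUnimodular c ∧ L ≤ hyperplane c := by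
  obtain ⟨e⟩ := hL
  let b := Module.Basis.ofEquivFun e.symm
  have hb : LinearIndependent R ![(b 0 : Fin 3 → R), b 1] := by
    have h := b.linearIndependent.map' L.subtype L.ker_subtype
    rwa [show L.subtype ∘ b = ![(b 0 : Fin 3 → R), b 1] from List.ofFn_inj.1 rfl] at h
  refine ⟨b 0 ⨯₃ b 1, isUnimodular_crossProduct hb, fun v hv => ?_⟩
  have hv' : v = b.repr ⟨v, hv⟩ 0 • (b 0 : Fin 3 → R) + b.repr ⟨v, hv⟩ 1 • (b 1 : Fin 3 → R) := by
    simpa only [Fin.sum_univ_two, Submodule.coe_add, Submodule.coe_smul] using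
      (congrArg Subtype.val (b.sum_repr ⟨v, hv⟩)).symm
  rw [mem_hyperplane, hv', dotProduct_comm]
  simp [add_dotProduct, smul_dotProduct]

end Line

section Arc

variable {R : Type*} [CommRing R] {ι : Type*} [Fintype ι] {u n : ℕ}

open scoped Classical in
/-- An `(|ι|, u)`-arc, given as a family of vectors spanning its points. The hyperplanes
`c ⬝ᵥ x = 0` with `c` unimodular play the role of the lines. -/
structure IsArc (u : ℕ) (v : ι → Fin n → R) : Prop where
  isUnimodular : ∀ i, IsUnimodular (v i)
  card_le : ∀ c, IsUnimodular c → #{i | c ⬝ᵥ v i = 0} ≤ u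

open scoped Classical in
lemma pow_card_le_card_dotProduct_eq_zero {I : Ideal R} [Fintype I] {v c : Fin (n + 1) → R}
    (hv : IsUnimodular v) (hcv : c ⬝ᵥ v ∈ I) :
    Fintype.card I ^ n ≤ #{x : Fin (n + 1) → I | (c + fun j => (x j : R)) ⬝ᵥ v = 0} := by
  obtain ⟨i, hi⟩ := hv
  have hcard : Fintype.card I ^ n = #(univ : Finset (Fin n → I)) := by simp
  rw [hcard]
  refine card_le_card_of_surjOn i.removeNth fun w _ => ?_
  obtain ⟨x, hxI, hxw, hx⟩ := exists_removeNth_eq_and_dotProduct_eq hi (neg_mem hcv)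
    fun j => (w j).2
  refine ⟨fun j => ⟨x j, hxI j⟩, ?_, ?_⟩
  · simp [add_dotProduct, hx]
  · funext j
    exact Subtype.ext (congrFun hxw j)

variable [IsLocalRing R]

lemma IsUnimodular.add_of_mem_maximalIdeal {κ : Type*} {c x : κ → R} (hc : IsUnimodular c)
    (hx : ∀ j, x j ∈ maximalIdeal R) : IsUnimodular (c + x) := by
  rw [isUnimodular_iff_residue_comp_ne_zero] at hc ⊢
  convert hc using 1
  ext j
  simpa using hx j

open scoped Classical in
/-- Double counting over the `|𝔪| ^ (n + 1)` hyperplanes with coefficients congruent to `c`, of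
which each `v i` counted on the left lies on at least `|𝔪| ^ n`. -/
lemma IsArc.card_dotProduct_mem_maximalIdeal_le [Fintype (maximalIdeal R)]
    {v : ι → Fin (n + 1) → R} (hv : IsArc u v) {c : Fin (n + 1) → R} (hc : IsUnimodular c) :
    #{i | c ⬝ᵥ v i ∈ maximalIdeal R} ≤ Fintype.card (maximalIdeal R) * u := by
  set μ := Fintype.card (maximalIdeal R)
  have hcount := card_mul_le_card_mul (s := {i | c ⬝ᵥ v i ∈ maximalIdeal R})
    (t := (univ : Finset (Fin (n + 1) → maximalIdeal R)))
    (fun i x => (c + fun j => (x j : R)) ⬝ᵥ v i = 0) (m := μ ^ n) (n := u)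
    (fun i hi => pow_card_le_card_dotProduct_eq_zero (hv.isUnimodular i) (mem_filter.1 hi).2)
    (fun x _ => (card_le_card (filter_subset_filter _ (subset_univ _))).trans
      (hv.card_le _ (hc.add_of_mem_maximalIdeal fun j => (x j).2)))
  have hμ : 0 < μ := Fintype.card_pos
  rw [card_univ, Fintype.card_fun, Fintype.card_fin, pow_succ, mul_assoc, mul_comm] at hcount
  exact Nat.le_of_mul_le_mul_left hcount (pow_pos hμ n)

end Arc

section ProjectivePlane

open Configuration ProjectivePlane

variable {P L : Type*} [Membership P L] [ProjectivePlane P L]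

open scoped Classical in
lemma card_lines_through [Finite P] [Fintype L] (x : P) :
    #{l : L | x ∈ l} = order P L + 1 := by
  rw [← lineCount_eq L x, lineCount, Nat.card_eq_fintype_card, Fintype.card_subtype]

open scoped Classical in
lemma card_lines_through_pair [Fintype L] {x y : P} (h : x ≠ y) :
    #{l : L | x ∈ l ∧ y ∈ l} = 1 := by
  obtain ⟨hx, hy⟩ := HasLines.mkLine_ax (L := L) h
  refine card_eq_one.2 ⟨HasLines.mkLine h, ext fun l => ?_⟩
  rw [mem_filter_univ, mem_singleton]
  constructor
  · exact fun hl => (Nondegenerate.eq_or_eq hl.1 hl.2 hx hy).resolve_left h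
  · rintro rfl
    exact ⟨hx, hy⟩

variable {ι : Type*} [Fintype ι] {w : ℕ}

open scoped Classical in
lemma card_add_order_mul_card_fiber_le [Finite P] [Finite L] {p : ι → P}
    (hp : ∀ l : L, #{i | p i ∈ l} ≤ w) (x : P) :
    Fintype.card ι + order P L * #{i | p i = x} ≤ (order P L + 1) * w := by
  have := Fintype.ofFinite L
  set q := order P L
  have hlines (i : ι) : #{l : L | x ∈ l ∧ p i ∈ l} = 1 + if p i = x then q else 0 := by
    split_ifs with h
    · simp only [h, and_self, card_lines_through, add_comm, q]
    · exact card_lines_through_pair (Ne.symm h)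
  calc Fintype.card ι + q * #{i | p i = x}
      = ∑ i, #{l : L | x ∈ l ∧ p i ∈ l} := by
        simp [hlines, sum_add_distrib, sum_ite, mul_comm]
    _ = ∑ l : L with x ∈ l, #{i | p i ∈ l} := by
        simpa only [bipartiteAbove, bipartiteBelow, filter_filter] using
          sum_card_bipartiteAbove_eq_sum_card_bipartiteBelow (s := univ)
            (t := ({l | x ∈ l} : Finset L)) fun i l => p i ∈ l
    _ ≤ ∑ l : L with x ∈ l, w := sum_le_sum fun l _ => hp l
    _ = (q + 1) * w := by rw [sum_const, card_lines_through, smul_eq_mul]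

open scoped Classical in
lemma card_add_order_mul_succ_le [Finite P] [Finite L] {p : ι → P}
    (hp : ∀ l : L, #{i | p i ∈ l} ≤ w) {k : ℕ}
    (hk : (order P L ^ 2 + order P L + 1) * k < Fintype.card ι) :
    Fintype.card ι + order P L * (k + 1) ≤ (order P L + 1) * w := by
  have := Fintype.ofFinite P
  rw [← card_points P L] at hk
  obtain ⟨x, hx⟩ := Fintype.exists_lt_card_fiber_of_mul_lt_card p hk
  calc _ ≤ Fintype.card ι + order P L * #{i | p i = x} := by gcongr; exact hx
    _ ≤ _ := card_add_order_mul_card_fiber_le hp x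

open scoped Classical in
lemma order_projectivization (K : Type*) [Field K] [Finite K] :
    order (ℙ K (Fin 3 → K)) (ℙ K (Fin 3 → K)) = Nat.card K := by
  have := Fintype.ofFinite (ℙ K (Fin 3 → K))
  have h := card_points (ℙ K (Fin 3 → K)) (ℙ K (Fin 3 → K))
  rw [← Nat.card_eq_fintype_card, Projectivization.card_of_finrank K _ (Module.finrank_fin_fun K)]
    at h
  simp only [sum_range_succ, range_zero, sum_empty, pow_zero, pow_one] at h
  nlinarith

end ProjectivePlane

section HjelmslevPlane

variable {R : Type*} [CommRing R] [IsLocalRing R] {ι : Type*} [Fintype ι] {u : ℕ}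

/-- The image in the projective plane over the residue field of the point spanned by `v`, i.e. its
neighbour class. -/
noncomputable def neighbourClass (v : Fin 3 → R) (hv : IsUnimodular v) :
    ℙ (ResidueField R) (Fin 3 → ResidueField R) :=
  .mk _ (residue R ∘ v) (isUnimodular_iff_residue_comp_ne_zero.1 hv)

lemma neighbourClass_surjective (l : ℙ (ResidueField R) (Fin 3 → ResidueField R)) :
    ∃ (c : Fin 3 → R) (hc : IsUnimodular c), neighbourClass c hc = l := by
  obtain ⟨c, hc⟩ := (residue_surjective (R := R)).comp_left l.rep
  replace hc : residue R ∘ c = l.rep := hc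
  have hc' : IsUnimodular c := by
    rw [isUnimodular_iff_residue_comp_ne_zero, hc]
    exact l.rep_nonzero
  refine ⟨c, hc', ?_⟩
  simp only [neighbourClass, hc]
  exact l.mk_rep

lemma neighbourClass_mem_neighbourClass_iff {v c : Fin 3 → R} (hv : IsUnimodular v)
    (hc : IsUnimodular c) :
    neighbourClass v hv ∈ neighbourClass c hc ↔ c ⬝ᵥ v ∈ maximalIdeal R := by
  rw [Configuration.ofField.mem_iff, neighbourClass, neighbourClass,
    Projectivization.orthogonal_mk, ← RingHom.map_dotProduct, residue_eq_zero_iff, dotProduct_comm]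

open scoped Classical in
theorem IsArc.card_add_card_residueField_mul_succ_le [Finite R] {v : ι → Fin 3 → R}
    (hv : IsArc u v) {k : ℕ}
    (hk : (Nat.card (ResidueField R) ^ 2 + Nat.card (ResidueField R) + 1) * k < Fintype.card ι) :
    Fintype.card ι + Nat.card (ResidueField R) * (k + 1) ≤
      (Nat.card (ResidueField R) + 1) * (Nat.card (maximalIdeal R) * u) := by
  have := Fintype.ofFinite (maximalIdeal R)
  have : Finite (ResidueField R) := Finite.of_surjective _ residue_surjective
  rw [← order_projectivization] at hk ⊢
  refine card_add_order_mul_succ_le (p := fun i => neighbourClass (v i) (hv.isUnimodular i))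
    (fun l => ?_) hk
  obtain ⟨c, hc, rfl⟩ := neighbourClass_surjective l
  simp only [neighbourClass_mem_neighbourClass_iff]
  rw [Nat.card_eq_fintype_card]
  exact hv.card_dotProduct_mem_maximalIdeal_le hc

end HjelmslevPlane

section Points

variable {R : Type} [CommRing R] {n u : ℕ}

open scoped Classical in
lemma exists_isArc_of_card_filter_le {M : Multiset (Submodule R (Fin (n + 1) → R))}
    (hpoint : ∀ P ∈ M, IsPoint P)
    (hplane : ∀ L, IsFreeRank n L → Multiset.card (M.filter fun P => P ≤ L) ≤ u) :
    ∃ v : M.ToType → Fin (n + 1) → R, IsArc u v := by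
  choose v hv hP using fun P : M.ToType => hpoint P.1 Multiset.coe_mem
  refine ⟨v, hv, fun c hc => ?_⟩
  have h := hplane _ (isFreeRank_hyperplane hc)
  rw [← M.map_univ_coe, Multiset.filter_map, Multiset.card_map] at h
  simpa only [Function.comp_def, hP, Submodule.span_singleton_le_iff_mem, mem_hyperplane, card_def,
    filter_val] using h

open scoped Classical in
lemma IsArc.ncard_range_span_le_of_isLine [IsLocalRing R] [IsArtinianRing R] {ι : Type*}
    [Fintype ι] {v : ι → Fin 3 → R} (hv : IsArc u v) {L : Submodule R (Fin 3 → R)}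
    (hL : IsLine L) : {P ∈ Set.range fun i => R ∙ v i | P ≤ L}.ncard ≤ u := by
  obtain ⟨c, hc, hLc⟩ := exists_le_hyperplane_of_isLine hL
  have hsub : {P ∈ Set.range fun i => R ∙ v i | P ≤ L} ⊆
      (fun i => R ∙ v i) '' ({i | c ⬝ᵥ v i = 0} : Finset ι) := by
    rintro _ ⟨⟨i, rfl⟩, hi⟩
    exact ⟨i, by simpa [mem_hyperplane] using hLc (hi (Submodule.mem_span_singleton_self _)), rfl⟩
  calc {P ∈ Set.range fun i => R ∙ v i | P ≤ L}.ncard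
      ≤ _ := Set.ncard_le_ncard hsub (Set.toFinite _)
    _ ≤ #{i | c ⬝ᵥ v i = 0} := by
      simpa only [Set.ncard_coe_finset] using Set.ncard_image_le (finite_toSet _)
    _ ≤ u := hv.card_le c hc

end Points

section ZMod4

instance : IsLocalRing R4 :=
  have : Nontrivial R4 := inferInstanceAs (Nontrivial (Fin 4))
  .of_isUnit_or_isUnit_one_sub_self (by decide)

lemma card_maximalIdeal_R4 : Nat.card (maximalIdeal R4) = 2 := by
  have : Nat.card {a : R4 // ¬IsUnit a} = 2 := by
    rw [Nat.card_eq_fintype_card]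
    decide
  exact this

lemma card_residueField_R4 : Nat.card (ResidueField R4) = 2 := by
  have h := (maximalIdeal R4).card_eq_card_quotient_mul_card
  rw [card_maximalIdeal_R4, Nat.card_zmod] at h
  change Nat.card (R4 ⧸ maximalIdeal R4) = 2
  omega

lemma IsArc.card_le_twentyTwo {ι : Type*} [Fintype ι] {v : ι → Fin 3 → R4} (hv : IsArc 5 v) :
    Fintype.card ι ≤ 22 := by
  by_contra! h
  have := hv.card_add_card_residueField_mul_succ_le (k := 3)
    (by rw [card_residueField_R4]; omega)
  rw [card_residueField_R4, card_maximalIdeal_R4] at this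
  omega

/-- The vectors spanning the points of `A22`, in the listed order. -/
def a22Vector : Fin 22 → Fin 3 → R4 :=
  ![![1,0,0], ![0,1,0], ![0,0,1], ![1,1,1], ![0,1,1], ![1,0,1], ![1,1,0],
    ![1,2,2], ![2,1,2], ![2,2,1], ![1,3,3], ![2,1,3], ![1,2,3], ![1,3,2],
    ![1,2,0], ![2,1,0], ![2,0,1], ![1,3,1], ![1,0,2], ![0,1,2], ![0,2,1], ![1,1,3]]

lemma A22_eq_range : A22 = Set.range fun i => R4 ∙ a22Vector i := by
  change A22 = Set.range fun i => pt (a22Vector i)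
  rw [A22, Set.range_comp' pt a22Vector]
  simp only [a22Vector, range_cons, range_empty, Set.union_empty, Set.singleton_union]

lemma span_a22Vector_injective : Function.Injective fun i => R4 ∙ a22Vector i := by
  have eq_of_smul_eq : ∀ i j, (∃ r : R4, r • a22Vector j = a22Vector i) → i = j := by
    decide +kernel
  intro i j (hij : R4 ∙ a22Vector i = R4 ∙ a22Vector j)
  exact eq_of_smul_eq i j
    (Submodule.mem_span_singleton.1 (hij ▸ Submodule.mem_span_singleton_self _))

lemma isArc_a22Vector : IsArc 5 a22Vector where
  isUnimodular := by unfold IsUnimodular; decide +kernel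
  card_le := by
    have h : ∀ c : Fin 3 → R4, (∃ i, IsUnit (c i)) → #{i | c ⬝ᵥ a22Vector i = 0} ≤ 5 := by
      decide +kernel
    exact fun c hc => by convert h c hc

end ZMod4

attribute [local instance] Classical.propDecidable

/-- The 22 listed points form a (22,5)-arc in PHG(2, ℤ/4ℤ), and every multiset of
23 points has a line containing at least 6 of its points counted with multiplicity. -/
theorem max_five_arc_Z4 :
    ((∀ P ∈ A22, IsPoint P) ∧ A22.ncard = 22 ∧
      ∀ L : Submodule R4 (Fin 3 → R4), IsLine L → {P ∈ A22 | P ≤ L}.ncard ≤ 5) ∧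
    (∀ M : Multiset (Submodule R4 (Fin 3 → R4)), (∀ P ∈ M, IsPoint P) →
      Multiset.card M = 23 →
      ∃ L : Submodule R4 (Fin 3 → R4), IsLine L ∧
        6 ≤ Multiset.card (M.filter fun P => P ≤ L)) := by
  refine ⟨⟨?_, ?_, fun L hL => ?_⟩, fun M hpoint hcard => ?_⟩
  · rw [A22_eq_range]
    rintro _ ⟨i, rfl⟩
    exact ⟨a22Vector i, isArc_a22Vector.isUnimodular i, rfl⟩
  · rw [A22_eq_range, ← Set.image_univ, Set.ncard_image_of_injective _ span_a22Vector_injective,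
      Set.ncard_univ, Nat.card_fin]
  · rw [A22_eq_range]
    exact isArc_a22Vector.ncard_range_span_le_of_isLine hL
  · by_contra! hline
    obtain ⟨v, hv⟩ :=
      exists_isArc_of_card_filter_le hpoint fun L hL => Nat.le_of_lt_succ (hline L hL)
    have hle : Multiset.card M ≤ 22 := M.card_coe ▸ hv.card_le_twentyTwo
    omega
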